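/- Let H be a compact metrizable space, let n ≥ 1, and let v_1, …, v_{n+1} be n+1 distinct points of H. Let (X_1,d_1), …, (X_{n+1},d_{n+1}) be compact path-connected metric spaces with d_GH((X_i,d_i),(X_j,d_j)) > 0 for all distinct i, j. Then there exists a topological embedding Φ : H → 𝒫 (into the Gromov–Hausdorff space) such that Φ(v_i) = (X_i,d_i) for every i = 1, …, n+1. -/

import Mathlib

open GromovHausdorff

namespace GHEmb

/-- A pseudometric given as a plain function. -/
structure PD (S : Type) where
  D : S → S → ℝ
  self : ∀ x, D x x = 0
  symm : ∀ x y, D x y = D y x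
  tri : ∀ x y z, D x z ≤ D x y + D y z

theorem PD.nonneg {S : Type} (P : PD S) (x y : S) : 0 ≤ P.D x y := by
  have h1 := P.tri x y x
  have h2 := P.self x
  have h3 := P.symm x y
  linarith

theorem PD.congr_left {S : Type} (P : PD S) {x y : S} (h : P.D x y = 0) (z : S) :
    P.D x z = P.D y z := by
  have h1 := P.tri x y z
  have h2 := P.tri y x z
  have h3 := P.symm x y
  linarith

theorem PD.congr_right {S : Type} (P : PD S) {x y : S} (h : P.D x y = 0) (z : S) :
    P.D z x = P.D z y := by
  rw [P.symm z x, P.symm z y, P.congr_left h]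

/-- Type synonym carrying the pseudometric. -/
structure Wrap {S : Type} (P : PD S) where
  val : S

noncomputable instance {S : Type} (P : PD S) : PseudoMetricSpace (Wrap P) where
  dist x y := P.D x.val y.val
  dist_self x := P.self x.val
  dist_comm x y := P.symm x.val y.val
  dist_triangle x y z := P.tri x.val y.val z.val

theorem wrap_dist {S : Type} (P : PD S) (x y : Wrap P) : dist x y = P.D x.val y.val := rfl

/-- The metric quotient. -/
abbrev Quo {S : Type} (P : PD S) : Type := SeparationQuotient (Wrap P)

/-- The quotient map. -/
noncomputable def toQuo {S : Type} (P : PD S) (x : S) : Quo P := SeparationQuotient.mk ⟨x⟩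

theorem dist_toQuo {S : Type} (P : PD S) (x y : S) :
    dist (toQuo P x) (toQuo P y) = P.D x y := rfl

theorem toQuo_surj {S : Type} (P : PD S) : Function.Surjective (toQuo P) := by
  intro q
  obtain ⟨⟨x⟩, rfl⟩ := SeparationQuotient.surjective_mk q
  exact ⟨x, rfl⟩

theorem continuous_toQuo {S : Type} [TopologicalSpace S] (P : PD S)
    (hc : Continuous fun z : S × S => P.D z.1 z.2) : Continuous (toQuo P) := by
  rw [continuous_iff_continuousAt]
  intro x
  rw [ContinuousAt, tendsto_iff_dist_tendsto_zero]
  simp only [dist_toQuo]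
  have : Continuous fun y => P.D y x := hc.comp (continuous_id.prodMk continuous_const)
  have h2 := this.tendsto x
  rwa [P.self x] at h2

theorem compact_quo {S : Type} [TopologicalSpace S] [CompactSpace S] (P : PD S)
    (hc : Continuous fun z : S × S => P.D z.1 z.2) : CompactSpace (Quo P) :=
  (toQuo_surj P).compactSpace (continuous_toQuo P hc)

theorem pathConn_quo {S : Type} [TopologicalSpace S] [PathConnectedSpace S] (P : PD S)
    (hc : Continuous fun z : S × S => P.D z.1 z.2) : PathConnectedSpace (Quo P) :=
  (toQuo_surj P).pathConnectedSpace (continuous_toQuo P hc)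

instance {S : Type} [h : Nonempty S] (P : PD S) : Nonempty (Quo P) :=
  h.map (toQuo P)

theorem ghDist_quo_le {S : Type} [Nonempty S] (P Q : PD S) [CompactSpace (Quo P)]
    [CompactSpace (Quo Q)] (ε : ℝ) (h : ∀ x y, |P.D x y - Q.D x y| ≤ ε) :
    ghDist (Quo P) (Quo Q) ≤ 3 * ε / 2 := by
  have hr : Function.RightInverse (Function.surjInv (toQuo_surj P)) (toQuo P) :=
    Function.rightInverse_surjInv (toQuo_surj P)
  set r := Function.surjInv (toQuo_surj P) with hrdef
  have key := ghDist_le_of_approx_subsets (X := Quo P) (Y := Quo Q) (s := Set.range (toQuo P))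
    (fun x => toQuo Q (r x.1)) (ε₁ := 0) (ε₂ := ε) (ε₃ := ε)
    (fun x => ⟨x, toQuo_surj P x, by simp⟩)
    (by
      intro x
      obtain ⟨y, rfl⟩ := toQuo_surj Q x
      refine ⟨⟨toQuo P y, y, rfl⟩, ?_⟩
      simp only [dist_toQuo]
      have h0 : P.D y (r (toQuo P y)) = 0 := by
        rw [← dist_toQuo, hr]; simp
      have := h y (r (toQuo P y))
      rw [h0, zero_sub, abs_neg] at this
      exact (le_abs_self _).trans this)
    (by
      rintro ⟨x, hx⟩ ⟨y, hy⟩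
      simp only [dist_toQuo]
      have : dist x y = P.D (r x) (r y) := by
        rw [← dist_toQuo, hr, hr]
      rw [Subtype.dist_eq]
      simp only
      rw [this]
      exact h _ _)
  linarith

/-- Metric betweenness branch points. -/
def Branch {M : Type} [PseudoMetricSpace M] (q : M) : Prop :=
  ∃ x y w : M, dist q x ≠ 0 ∧ dist q y ≠ 0 ∧ dist q w ≠ 0 ∧
    dist x y = dist x q + dist q y ∧ dist y w = dist y q + dist q w ∧
    dist x w = dist x q + dist q w

/-- The isometry invariant: the lengths of terminal arms at branch points. -/
def ArmLen (M : Type) [PseudoMetricSpace M] : Set ℝ :=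
  {L | ∃ q t : M, Branch q ∧ dist q t = L ∧ (∀ w, dist q w = dist q t + dist t w → dist t w = 0) ∧
    ∃ z, dist q z ≠ 0 ∧ dist z t ≠ 0 ∧ dist q t = dist q z + dist z t}

theorem inv_congr {M N : Type} [PseudoMetricSpace M] [PseudoMetricSpace N] (f : M → N)
    (hf : Isometry f) (hs : Function.Surjective f) : ArmLen M = ArmLen N := by
  have hb : ∀ q, Branch (f q) ↔ Branch q := by
    intro q
    simp only [Branch, hs.exists, hf.dist_eq]
  ext L
  simp only [ArmLen, Set.mem_ofPred_eq, hs.exists, hs.forall, hf.dist_eq, hb]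

theorem toGH_eq_of_isometry {S X : Type} (P : PD S) [CompactSpace (Quo P)] [Nonempty S]
    [MetricSpace X] [CompactSpace X] [Nonempty X] (f : S → X)
    (hf : ∀ x y, P.D x y = dist (f x) (f y)) (hs : Function.Surjective f) :
    toGHSpace (Quo P) = toGHSpace X := by
  rw [toGHSpace_eq_toGHSpace_iff_isometryEquiv]
  have hr := Function.rightInverse_surjInv (toQuo_surj P)
  set r := Function.surjInv (toQuo_surj P) with hrdef
  have iso : Isometry (fun q => f (r q)) := by
    refine Isometry.of_dist_eq fun a b => ?_
    rw [← hf, ← dist_toQuo, hr, hr]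
  have surj : Function.Surjective (fun q => f (r q)) := by
    intro x
    obtain ⟨s, rfl⟩ := hs x
    refine ⟨toQuo P s, ?_⟩
    rw [← dist_eq_zero, ← hf, ← dist_toQuo, hr, dist_self]
  exact ⟨IsometryEquiv.mk (Equiv.ofBijective _ ⟨iso.injective, surj⟩) iso⟩

theorem inv_eq_of_toGH {M N : Type} [MetricSpace M] [CompactSpace M] [Nonempty M]
    [MetricSpace N] [CompactSpace N] [Nonempty N] (h : toGHSpace M = toGHSpace N) :
    ArmLen M = ArmLen N := by
  rw [toGHSpace_eq_toGHSpace_iff_isometryEquiv] at h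
  obtain ⟨e⟩ := h
  exact inv_congr e e.isometry e.surjective

theorem pathConn_rep {M : Type} [MetricSpace M] [CompactSpace M] [Nonempty M]
    (h : PathConnectedSpace M) : PathConnectedSpace (toGHSpace M).Rep := by
  have := GHSpace.toGHSpace_rep (toGHSpace M)
  rw [toGHSpace_eq_toGHSpace_iff_isometryEquiv] at this
  obtain ⟨e⟩ := this
  exact e.symm.surjective.pathConnectedSpace e.symm.continuous

theorem inv_quo {S : Type} (P : PD S) : ArmLen (Quo P) = ArmLen (Wrap P) :=
  (inv_congr (SeparationQuotient.mk : Wrap P → Quo P)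
    (Isometry.of_dist_eq fun _ _ => rfl) SeparationQuotient.surjective_mk).symm

/-- Continuity of a family of quotients. -/
theorem continuous_family {H : Type*} {S : Type} [TopologicalSpace H] [TopologicalSpace S]
    [CompactSpace S] [Nonempty S] (P : H → PD S) [∀ h, CompactSpace (Quo (P h))]
    (hc : Continuous fun z : H × (S × S) => (P z.1).D z.2.1 z.2.2) :
    Continuous fun h => toGHSpace (Quo (P h)) := by
  rw [Metric.continuous_iff']
  intro h ε hε
  let F : H → C(S × S, ℝ) := fun h => ⟨fun z => (P h).D z.1 z.2,
    hc.comp (continuous_const.prodMk continuous_id)⟩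
  have hF : Continuous F := ContinuousMap.continuous_of_continuous_uncurry _ hc
  have := (Metric.continuous_iff'.1 hF) h (ε / 2) (half_pos hε)
  filter_upwards [this] with a ha
  have hle : ghDist (Quo (P a)) (Quo (P h)) ≤ 3 * (ε / 2) / 2 := by
    refine ghDist_quo_le _ _ _ fun x y => ?_
    have := (ContinuousMap.dist_apply_le_dist (f := F a) (g := F h) (x, y)).trans ha.le
    rwa [Real.dist_eq] at this
  change ghDist _ _ < ε
  linarith

/-- Wedge of a space with a star having countably many arms. -/
def Star {Y : Type} (p : Y) : Set (Y × (ℕ → unitInterval)) :=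
  {z | (∀ k, z.1 = p ∨ z.2 k = 0) ∧ ∀ j k, j ≠ k → z.2 j = 0 ∨ z.2 k = 0}

theorem star_compact {Y : Type} [TopologicalSpace Y] [T2Space Y] [CompactSpace Y] (p : Y) :
    CompactSpace (Star p) := by
  rw [← isCompact_iff_compactSpace]
  apply IsClosed.isCompact
  have h1 : ∀ k : ℕ, IsClosed {z : Y × (ℕ → unitInterval) | z.2 k = 0} := fun k =>
    isClosed_eq ((continuous_apply k).comp continuous_snd) continuous_const
  have h0 : IsClosed {z : Y × (ℕ → unitInterval) | z.1 = p} :=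
    isClosed_eq continuous_fst continuous_const
  have : Star p = (⋂ k, ({z : Y × (ℕ → unitInterval) | z.1 = p} ∪ {z | z.2 k = 0})) ∩
      ⋂ j, ⋂ k, ⋂ (_ : j ≠ k), ({z : Y × (ℕ → unitInterval) | z.2 j = 0} ∪ {z | z.2 k = 0}) := by
    ext z
    simp [Star]
  rw [this]
  exact (isClosed_iInter fun k => h0.union (h1 k)).inter
    (isClosed_iInter fun j => isClosed_iInter fun k => isClosed_iInter fun _ => (h1 j).union (h1 k))

theorem star_base {Y : Type} (p x : Y) : (x, (0 : ℕ → unitInterval)) ∈ Star p := by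
  simp [Star]

theorem star_arm {Y : Type} (p : Y) (k : ℕ) (r : unitInterval) :
    (p, (Pi.single k r : ℕ → unitInterval)) ∈ Star p := by
  refine ⟨fun _ => Or.inl rfl, fun i j hij => ?_⟩
  by_cases h : i = k
  · subst h
    right
    exact Pi.single_eq_of_ne hij.symm _
  · left
    exact Pi.single_eq_of_ne h _

theorem star_pathConn {Y : Type} [TopologicalSpace Y] [PathConnectedSpace Y] (p : Y) :
    PathConnectedSpace (Star p) := by
  rw [← isPathConnected_iff_pathConnectedSpace]
  refine ⟨(p, 0), star_base p p, ?_⟩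
  rintro ⟨x, t⟩ hz
  by_cases h : t = 0
  · subst h
    have hj := (PathConnectedSpace.joined p x).somePath
    refine ⟨(PathConnectedSpace.somePath p x).prod (Path.refl 0), fun s => ?_⟩
    exact star_base p _
  · have hx : x = p := by
      by_contra hne
      exact h (funext fun k => (hz.1 k).resolve_left hne)
    subst hx
    let γ : Path (x, (0 : ℕ → unitInterval)) (x, t) :=
      { toFun := fun s => (x, fun k => s * t k)
        continuous_toFun := by fun_prop
        source' := by ext <;> simp
        target' := by simp }
    refine ⟨γ, fun s => ⟨fun _ => Or.inl rfl, fun i j hij => ?_⟩⟩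
    change s * t i = 0 ∨ s * t j = 0
    rcases hz.2 i j hij with h | h
    · left; simp only at h; rw [h, mul_zero]
    · right; simp only at h; rw [h, mul_zero]

theorem summ_aux {l : ℕ → ℝ} (hl : ∀ k, 0 ≤ l k) (hs : Summable l) (t u : ℕ → unitInterval) :
    Summable fun k => l k * |(t k : ℝ) - u k| := by
  refine Summable.of_nonneg_of_le (fun k => mul_nonneg (hl k) (abs_nonneg _)) (fun k => ?_) hs
  have : |(t k : ℝ) - u k| ≤ 1 := by
    rw [abs_le]
    have := (t k).2.1
    have := (t k).2.2
    have := (u k).2.1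
    have := (u k).2.2
    constructor <;> linarith
  nlinarith [hl k]

/-- The wedge pseudometric. -/
noncomputable def starPD {Y : Type} (p : Y) (A : PD Y) (l : ℕ → ℝ) (hl : ∀ k, 0 ≤ l k)
    (hs : Summable l) : PD (Star p) where
  D x y := A.D x.1.1 y.1.1 + ∑' k, l k * |(x.1.2 k : ℝ) - y.1.2 k|
  self x := by simp [A.self]
  symm x y := by simp_rw [A.symm x.1.1 y.1.1, abs_sub_comm]
  tri x y z := by
    have h1 := A.tri x.1.1 y.1.1 z.1.1
    have h2 : ∑' k, l k * |(x.1.2 k : ℝ) - z.1.2 k| ≤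
        ∑' k, (l k * |(x.1.2 k : ℝ) - y.1.2 k| + l k * |(y.1.2 k : ℝ) - z.1.2 k|) := by
      refine (summ_aux hl hs _ _).tsum_le_tsum (fun k => ?_)
        ((summ_aux hl hs _ _).add (summ_aux hl hs _ _))
      rw [← mul_add]
      exact mul_le_mul_of_nonneg_left (abs_sub_le _ _ _) (hl k)
    rw [(summ_aux hl hs _ _).tsum_add (summ_aux hl hs _ _)] at h2
    linarith

section star
variable {Y : Type} (p : Y) (A : PD Y) (l : ℕ → ℝ) (hl : ∀ k, 0 ≤ l k) (hs : Summable l)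

theorem star_D (x y : Star p) : (starPD p A l hl hs).D x y =
    A.D x.1.1 y.1.1 + ∑' k, l k * |(x.1.2 k : ℝ) - y.1.2 k| := rfl

theorem star_btw (hpos : ∀ k, 0 < l k) (x y z : Star p)
    (h : (starPD p A l hl hs).D x z = (starPD p A l hl hs).D x y + (starPD p A l hl hs).D y z) :
    A.D x.1.1 z.1.1 = A.D x.1.1 y.1.1 + A.D y.1.1 z.1.1 ∧
    ∀ k, |(x.1.2 k : ℝ) - z.1.2 k| = |(x.1.2 k : ℝ) - y.1.2 k| + |(y.1.2 k : ℝ) - z.1.2 k| := by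
  simp only [star_D] at h
  have h1 := A.tri x.1.1 y.1.1 z.1.1
  have s1 := summ_aux hl hs x.1.2 z.1.2
  have s2 := summ_aux hl hs x.1.2 y.1.2
  have s3 := summ_aux hl hs y.1.2 z.1.2
  have hnn : ∀ k, 0 ≤ l k * |(x.1.2 k : ℝ) - y.1.2 k| + l k * |(y.1.2 k : ℝ) - z.1.2 k|
      - l k * |(x.1.2 k : ℝ) - z.1.2 k| := by
    intro k
    have := mul_le_mul_of_nonneg_left (abs_sub_le (x.1.2 k : ℝ) (y.1.2 k) (z.1.2 k)) (hl k)
    linarith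
  have ht : ∑' k, (l k * |(x.1.2 k : ℝ) - y.1.2 k| + l k * |(y.1.2 k : ℝ) - z.1.2 k|
      - l k * |(x.1.2 k : ℝ) - z.1.2 k|) = _ := ((s2.add s3).tsum_sub s1)
  rw [s2.tsum_add s3] at ht
  have h0 := tsum_nonneg (L := SummationFilter.unconditional ℕ) hnn
  refine ⟨by linarith, fun k => ?_⟩
  have hz : ∑' k, (l k * |(x.1.2 k : ℝ) - y.1.2 k| + l k * |(y.1.2 k : ℝ) - z.1.2 k|
      - l k * |(x.1.2 k : ℝ) - z.1.2 k|) = 0 := by linarith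
  have hle := ((s2.add s3).sub s1).le_tsum k (fun j _ => hnn j)
  rw [hz] at hle
  have hk := hnn k
  have : l k * (|(x.1.2 k : ℝ) - y.1.2 k| + |(y.1.2 k : ℝ) - z.1.2 k|
      - |(x.1.2 k : ℝ) - z.1.2 k|) = 0 := by linarith
  rcases mul_eq_zero.1 this with h | h
  · exact absurd h (hpos k).ne'
  · linarith

/-- the base point -/
def bp : Star p := ⟨(p, 0), star_base p p⟩
/-- points on arms -/
def arm (k : ℕ) (r : unitInterval) : Star p := ⟨(p, Pi.single k r), star_arm p k r⟩

theorem D_arm_bp (k : ℕ) (r : unitInterval) : (starPD p A l hl hs).D (bp p) (arm p k r) = l k * r := by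
  rw [star_D]
  have : ∀ j, j ≠ k → l j * |(((bp p).1.2 j : unitInterval) : ℝ) - (arm p k r).1.2 j| = 0 := by
    intro j hj
    simp [bp, arm, Pi.single_eq_of_ne hj]
  rw [tsum_eq_single k this]
  simp [bp, arm, A.self, abs_of_nonneg r.2.1]

theorem D_arm_same (k : ℕ) (r s : unitInterval) :
    (starPD p A l hl hs).D (arm p k r) (arm p k s) = l k * |(r : ℝ) - s| := by
  rw [star_D]
  have : ∀ j, j ≠ k → l j * |(((arm p k r).1.2 j : unitInterval) : ℝ) - (arm p k s).1.2 j| = 0 := by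
    intro j hj
    simp [arm, Pi.single_eq_of_ne hj]
  rw [tsum_eq_single k this]
  simp [arm, A.self]

theorem D_arm_ne (j k : ℕ) (hjk : j ≠ k) (r s : unitInterval) :
    (starPD p A l hl hs).D (arm p j r) (arm p k s) = l j * r + l k * s := by
  rw [star_D]
  have : ∀ i, i ∉ ({j, k} : Finset ℕ) →
      l i * |(((arm p j r).1.2 i : unitInterval) : ℝ) - (arm p k s).1.2 i| = 0 := by
    intro i hi
    simp only [Finset.mem_insert, Finset.mem_singleton, not_or] at hi
    simp [arm, Pi.single_eq_of_ne hi.1, Pi.single_eq_of_ne hi.2]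
  rw [tsum_eq_sum this, Finset.sum_pair hjk]
  simp [arm, A.self, Pi.single_eq_of_ne hjk, Pi.single_eq_of_ne hjk.symm,
    abs_of_nonneg r.2.1, abs_of_nonneg s.2.1]

theorem eq_arm (x : Star p) (k : ℕ) (h : x.1.2 k ≠ 0) : x = arm p k (x.1.2 k) := by
  obtain ⟨⟨a, t⟩, h1, h2⟩ := x
  simp only at h
  have ha : a = p := (h1 k).resolve_right h
  subst ha
  apply Subtype.ext
  refine Prod.ext rfl (funext fun j => ?_)
  by_cases hj : j = k
  · subst hj; simp [arm]
  · simp only [arm, Pi.single_eq_of_ne hj]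
    exact (h2 j k hj).resolve_right h

theorem D_of_zero (x y : Star p) (hx : ∀ k, x.1.2 k = 0) (hy : ∀ k, y.1.2 k = 0) :
    (starPD p A l hl hs).D x y = A.D x.1.1 y.1.1 := by
  rw [star_D]; simp [hx, hy]

theorem between_sign {m x y : ℝ} (h : |x - y| = |x - m| + |m - y|) : (x - m) * (y - m) ≤ 0 := by
  have h1 : |x - y| ^ 2 = (|x - m| + |m - y|) ^ 2 := by rw [h]
  have h2 : (|x - m| + |m - y|) ^ 2 = |x - m| ^ 2 + |m - y| ^ 2 + 2 * (|x - m| * |m - y|) := by ring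
  rw [h2, sq_abs, sq_abs, sq_abs] at h1
  have h3 := mul_nonneg (abs_nonneg (x - m)) (abs_nonneg (m - y))
  nlinarith

theorem between_three {m x y w : ℝ} (h1 : |x - y| = |x - m| + |m - y|)
    (h2 : |y - w| = |y - m| + |m - w|) (h3 : |x - w| = |x - m| + |m - w|) :
    x = m ∨ y = m ∨ w = m := by
  by_contra! hcon
  obtain ⟨hx, hy, hw⟩ := hcon
  have g1 := between_sign h1
  have g2 := between_sign h2
  have g3 := between_sign h3
  rw [← sub_ne_zero] at hx hy hw
  rcases lt_or_gt_of_ne hx with hx | hx <;> rcases lt_or_gt_of_ne hy with hy | hy <;>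
  rcases lt_or_gt_of_ne hw with hw | hw <;> nlinarith

theorem branch_base (hpos : ∀ k, 0 < l k)
    (hA : ∀ x y z, A.D x z = A.D x y + A.D y z → A.D x y = 0 ∨ A.D y z = 0)
    (q : Wrap (starPD p A l hl hs)) (hq : Branch q) :
    (starPD p A l hl hs).D q.val (bp p) = 0 := by
  obtain ⟨⟨x⟩, ⟨y⟩, ⟨w⟩, hx, hy, hw, h1, h2, h3⟩ := hq
  obtain ⟨q⟩ := q
  simp only [wrap_dist] at *
  obtain ⟨a1, t1⟩ := star_btw p A l hl hs hpos _ _ _ h1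
  obtain ⟨a2, t2⟩ := star_btw p A l hl hs hpos _ _ _ h2
  obtain ⟨a3, t3⟩ := star_btw p A l hl hs hpos _ _ _ h3
  by_cases hk : ∃ k, q.1.2 k ≠ 0
  · exfalso
    obtain ⟨k, hk⟩ := hk
    have hno : ∀ z : Star p, (starPD p A l hl hs).D q z ≠ 0 →
        ((z.1.2 k : unitInterval) : ℝ) ≠ q.1.2 k := by
      intro z hz he
      have he' : z.1.2 k = q.1.2 k := Subtype.ext he
      have : z = q := by
        rw [eq_arm p z k (by rw [he']; exact hk), eq_arm p q k hk, he']
      rw [this, PD.self] at hz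
      exact hz rfl
    rcases between_three (t1 k) (t2 k) (t3 k) with h | h | h
    · exact hno x hx h
    · exact hno y hy h
    · exact hno w hw h
  · push Not at hk
    rw [D_of_zero p A l hl hs q (bp p) hk (fun _ => rfl)]
    by_contra hne
    have hno : ∀ z : Star p, (starPD p A l hl hs).D q z ≠ 0 → A.D q.1.1 z.1.1 ≠ 0 := by
      intro z hz h0
      have hz1 : z.1.1 ≠ p := by
        intro h
        rw [h] at h0
        exact hne h0
      rw [D_of_zero p A l hl hs q z hk (fun k => (z.2.1 k).resolve_left hz1)] at hz
      exact hz h0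
    rcases hA _ _ _ a1 with h | h
    · rw [A.symm] at h
      exact hno x hx h
    · exact hno y hy h

theorem inv_star (hpos : ∀ k, 0 < l k)
    (hA : ∀ x y z, A.D x z = A.D x y + A.D y z → A.D x y = 0 ∨ A.D y z = 0) :
    ArmLen (Wrap (starPD p A l hl hs)) = Set.range l := by
  ext L
  constructor
  · rintro ⟨q, ⟨t⟩, hq, rfl, hterm, ⟨z⟩, hz1, hz2, hz3⟩
    have hb := branch_base p A l hl hs hpos hA q hq
    obtain ⟨q⟩ := q
    simp only [wrap_dist] at *
    simp only [PD.congr_left _ hb] at *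
    obtain ⟨a1, t1⟩ := star_btw p A l hl hs hpos _ _ _ hz3
    by_cases hk : ∃ k, t.1.2 k ≠ 0
    · obtain ⟨k, hk⟩ := hk
      refine ⟨k, ?_⟩
      have ht := eq_arm p t k hk
      set r := t.1.2 k with hr
      rw [ht] at hterm ⊢
      have := hterm ⟨arm p k 1⟩ (by
        simp only [D_arm_bp, D_arm_same]
        have h1 : |(r : ℝ) - (1 : unitInterval)| = 1 - r := by
          rw [abs_of_nonpos]
          · simp
          · have := r.2.2
            simpa using this
        rw [h1]
        simp
        ring)
      simp only at this
      rw [PD.congr_right _ this, D_arm_bp]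
      simp
    · exfalso
      push Not at hk
      have hzk : ∀ k, z.1.2 k = 0 := by
        intro k
        have h := t1 k
        rw [hk k] at h
        simp only [bp, Pi.zero_apply, sub_self, abs_zero] at h
        have h2 := abs_nonneg ((0 : ℝ) - z.1.2 k)
        have h3 := abs_nonneg ((z.1.2 k : ℝ) - 0)
        apply Subtype.ext
        have h4 : |(z.1.2 k : ℝ) - 0| = 0 := by
          simp only [Set.Icc.coe_zero] at h
          linarith
        simpa using h4
      rw [D_of_zero p A l hl hs _ _ (fun _ => rfl) hzk] at hz1
      rw [D_of_zero p A l hl hs _ _ hzk hk] at hz2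
      rcases hA _ _ _ a1 with h | h
      · exact hz1 h
      · exact hz2 h
  · rintro ⟨k, rfl⟩
    have hD0 : ∀ j, (starPD p A l hl hs).D (bp p) (arm p j 1) ≠ 0 := by
      intro j
      rw [D_arm_bp]
      simpa using (hpos j).ne'
    have hE : ∀ i j, i ≠ j → (starPD p A l hl hs).D (arm p i 1) (arm p j 1) =
        (starPD p A l hl hs).D (arm p i 1) (bp p) + (starPD p A l hl hs).D (bp p) (arm p j 1) := by
      intro i j hij
      rw [D_arm_ne p A l hl hs i j hij, PD.symm _ _ (bp p), D_arm_bp, D_arm_bp]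
    refine ⟨⟨bp p⟩, ⟨arm p k 1⟩, ⟨⟨arm p 0 1⟩, ⟨arm p 1 1⟩, ⟨arm p 2 1⟩, hD0 0, hD0 1, hD0 2,
      hE _ _ (by decide), hE _ _ (by decide), hE _ _ (by decide)⟩, ?_, ?_, ?_⟩
    · rw [wrap_dist]; simp only [D_arm_bp]; simp
    · rintro ⟨w⟩ hw
      simp only [wrap_dist] at *
      obtain ⟨-, t1⟩ := star_btw p A l hl hs hpos _ _ _ hw
      have h := t1 k
      simp only [bp, arm, Pi.zero_apply, Pi.single_eq_same, Set.Icc.coe_zero, Set.Icc.coe_one,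
        zero_sub, abs_neg, abs_one] at h
      have h0 := (w.1.2 k).2.1
      have h1 := (w.1.2 k).2.2
      rw [abs_of_nonneg h0, abs_of_nonneg (by linarith)] at h
      have hw1 : w.1.2 k = 1 := Subtype.ext (by rw [Set.Icc.coe_one]; linarith)
      have : w = arm p k 1 := by
        rw [← hw1]
        exact eq_arm p w k (by rw [hw1]; exact one_ne_zero)
      rw [this, PD.self]
    · let r : unitInterval := ⟨1 / 2, by norm_num, by norm_num⟩
      have hr : (r : ℝ) = 1 / 2 := rfl
      refine ⟨⟨arm p k r⟩, ?_, ?_, ?_⟩ <;> simp only [wrap_dist, D_arm_bp, D_arm_same, hr]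
      · have := hpos k
        positivity
      · have := hpos k
        have : |(1 / 2 : ℝ) - (1 : unitInterval)| = 1 / 2 := by
          norm_num [abs_of_neg]
        rw [this]
        positivity
      · have : |(1 / 2 : ℝ) - (1 : unitInterval)| = 1 / 2 := by
          norm_num [abs_of_neg]
        rw [this]
        simp
        ring

end star

/-- The weights before rescaling. -/
noncomputable def wt {H : Type*} [MetricSpace H] (e : ℕ → H) (c : ℕ) (h : H) : ℕ → ℝ
  | 0 => 0
  | 1 => c
  | k + 2 => dist h (e k)

theorem wt_nonneg {H : Type*} [MetricSpace H] (e : ℕ → H) (c : ℕ) (h : H) (k : ℕ) :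
    0 ≤ wt e c h k := by
  match k with
  | 0 => exact le_rfl
  | 1 => exact Nat.cast_nonneg c
  | k + 2 => exact dist_nonneg

theorem wt_cont {H : Type*} [MetricSpace H] (e : ℕ → H) (c : ℕ) (k : ℕ) :
    Continuous fun h => wt e c h k := by
  match k with
  | 0 => exact continuous_const
  | 1 => exact continuous_const
  | k + 2 => exact continuous_id.dist continuous_const

/-- The relative arm lengths. -/
noncomputable def ln {H : Type*} [MetricSpace H] (e : ℕ → H) (c : ℕ) (h : H) (k : ℕ) : ℝ :=
  (1 / 4) ^ k * (1 + wt e c h k / (1 + wt e c h k))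

theorem frac_bd {u : ℝ} (hu : 0 ≤ u) : 0 ≤ u / (1 + u) ∧ u / (1 + u) < 1 :=
  ⟨by positivity, by rw [div_lt_one (by linarith)]; linarith⟩

theorem ln_pos {H : Type*} [MetricSpace H] (e : ℕ → H) (c : ℕ) (h : H) (k : ℕ) :
    0 < ln e c h k := by
  have := (frac_bd (wt_nonneg e c h k)).1
  unfold ln
  positivity

theorem ln_le {H : Type*} [MetricSpace H] (e : ℕ → H) (c : ℕ) (h : H) (k : ℕ) :
    ln e c h k ≤ (1 / 4) ^ k * 2 := by
  have := (frac_bd (wt_nonneg e c h k)).2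
  unfold ln
  gcongr
  linarith

theorem ln_anti {H : Type*} [MetricSpace H] (e : ℕ → H) (c : ℕ) (h : H) :
    StrictAnti (ln e c h) := by
  refine strictAnti_nat_of_succ_lt fun k => ?_
  have h1 := ln_le e c h (k + 1)
  have h2 := (frac_bd (wt_nonneg e c h k)).1
  have h3 : (1 / 4 : ℝ) ^ k * 1 ≤ ln e c h k := by
    unfold ln
    gcongr
    linarith
  have h4 : (0 : ℝ) < (1 / 4) ^ k := by positivity
  rw [pow_succ] at h1
  linarith

theorem ln_summable {H : Type*} [MetricSpace H] (e : ℕ → H) (c : ℕ) (h : H) :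
    Summable (ln e c h) :=
  Summable.of_nonneg_of_le (fun k => (ln_pos e c h k).le) (ln_le e c h)
    ((summable_geometric_of_lt_one (by norm_num) (by norm_num)).mul_right 2)

theorem ln_cont {H : Type*} [MetricSpace H] (e : ℕ → H) (c : ℕ) (k : ℕ) :
    Continuous fun h => ln e c h k := by
  unfold ln
  have := wt_cont e c k
  refine continuous_const.mul (continuous_const.add (this.div (continuous_const.add this) ?_))
  intro h
  have := wt_nonneg e c h k
  positivity

theorem ln_decode {H : Type*} [MetricSpace H] (e : ℕ → H) (he : DenseRange e) {c c' : ℕ} {h h' : H}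
    {r r' : ℝ} (hr : 0 < r) (hr' : 0 < r')
    (heq : Set.range (fun k => r * ln e c h k) = Set.range (fun k => r' * ln e c' h' k)) :
    c = c' ∧ h = h' := by
  have anti : ∀ {r : ℝ} (_ : 0 < r) (c : ℕ) (h : H), StrictAnti fun k => r * ln e c h k :=
    fun hr c h i j hij => mul_lt_mul_of_pos_left (ln_anti e c h hij) hr
  have hfun : (fun k => r * ln e c h k) = fun k => r' * ln e c' h' k := by
    have h1 : StrictMono (fun k => OrderDual.toDual (r * ln e c h k)) := anti hr c h
    have h2 : StrictMono (fun k => OrderDual.toDual (r' * ln e c' h' k)) := anti hr' c' h'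
    exact (h1.range_inj h2).1 heq
  have hk := fun k => congrFun hfun k
  have h0 : r = r' := by
    have := hk 0
    simpa [ln, wt] using this
  subst h0
  have hw : ∀ k, wt e c h k = wt e c' h' k := by
    intro k
    have h1 := mul_left_cancel₀ hr.ne' (hk k)
    unfold ln at h1
    have h2 := mul_left_cancel₀ (by positivity) h1
    have p1 := wt_nonneg e c h k
    have p2 := wt_nonneg e c' h' k
    have h3 := add_left_cancel h2
    rw [div_eq_div_iff (by positivity) (by positivity)] at h3
    linarith
  refine ⟨?_, ?_⟩
  · have := hw 1
    simpa [wt] using this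
  · have hd : ∀ k, dist h (e k) = dist h' (e k) := fun k => hw (k + 2)
    have : (fun x => dist h x) = fun x => dist h' x :=
      he.equalizer (by fun_prop) (by fun_prop) (funext hd)
    have h2 := congrFun this h'
    simpa using h2

/-- The concave rescaling. -/
noncomputable def ph (ε u : ℝ) : ℝ := u / (1 + ε * u)

theorem ph_mono {ε a b : ℝ} (hε : 0 ≤ ε) (ha : 0 ≤ a) (hab : a ≤ b) : ph ε a ≤ ph ε b := by
  unfold ph
  have hb : 0 ≤ b := ha.trans hab
  rw [div_le_div_iff₀ (by positivity) (by positivity)]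
  nlinarith

theorem ph_sub {ε a b : ℝ} (hε : 0 ≤ ε) (ha : 0 ≤ a) (hb : 0 ≤ b) :
    ph ε (a + b) ≤ ph ε a + ph ε b := by
  unfold ph
  rw [add_div]
  have h1 := mul_nonneg hε ha
  have h2 := mul_nonneg hε hb
  gcongr <;> linarith

theorem ph_strict {ε a b : ℝ} (hε : 0 < ε) (ha : 0 < a) (hb : 0 < b) :
    ph ε (a + b) < ph ε a + ph ε b := by
  unfold ph
  rw [add_div]
  have h1 := mul_pos hε ha
  have h2 := mul_pos hε hb
  refine add_lt_add ?_ ?_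
  · exact div_lt_div_of_pos_left ha (by positivity) (by linarith)
  · exact div_lt_div_of_pos_left hb (by positivity) (by linarith)

/-- The pseudometric on the product. -/
noncomputable def prodPD {m : ℕ} (X : Fin m → Type) [∀ i, MetricSpace (X i)] (c : Fin m → ℝ)
    (hc : ∀ i, 0 ≤ c i) (ε : ℝ) (hε : 0 ≤ ε) : PD (∀ i, X i) where
  D x y := ph ε (∑ i, c i * dist (x i) (y i))
  self x := by simp [ph]
  symm x y := by simp_rw [dist_comm]
  tri x y z := by
    have nn : ∀ x y : ∀ i, X i, 0 ≤ ∑ i, c i * dist (x i) (y i) := fun x y =>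
      Finset.sum_nonneg fun i _ => mul_nonneg (hc i) dist_nonneg
    refine le_trans (ph_mono hε (nn x z) ?_) (ph_sub hε (nn x y) (nn y z))
    rw [← Finset.sum_add_distrib]
    refine Finset.sum_le_sum fun i _ => ?_
    rw [← mul_add]
    exact mul_le_mul_of_nonneg_left (dist_triangle _ _ _) (hc i)

theorem prodPD_strict {m : ℕ} (X : Fin m → Type) [∀ i, MetricSpace (X i)] (c : Fin m → ℝ)
    (hc : ∀ i, 0 ≤ c i) (ε : ℝ) (hε : 0 < ε) (x y z : ∀ i, X i)
    (h : (prodPD X c hc ε hε.le).D x z = (prodPD X c hc ε hε.le).D x y +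
      (prodPD X c hc ε hε.le).D y z) :
    (prodPD X c hc ε hε.le).D x y = 0 ∨ (prodPD X c hc ε hε.le).D y z = 0 := by
  have nn : ∀ x y : ∀ i, X i, 0 ≤ ∑ i, c i * dist (x i) (y i) := fun x y =>
    Finset.sum_nonneg fun i _ => mul_nonneg (hc i) dist_nonneg
  by_contra! hcon
  have pos : ∀ x y, (prodPD X c hc ε hε.le).D x y ≠ 0 → 0 < ∑ i, c i * dist (x i) (y i) := by
    intro x y hne
    refine lt_of_le_of_ne (nn x y) fun h0 => hne ?_
    simp only [prodPD, ← h0, ph, zero_div]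
  have h1 := ph_strict hε (pos x y hcon.1) (pos y z hcon.2)
  have h2 : ph ε (∑ i, c i * dist (x i) (z i)) ≤
      ph ε (∑ i, c i * dist (x i) (y i) + ∑ i, c i * dist (y i) (z i)) := by
    refine ph_mono hε.le (nn x z) ?_
    rw [← Finset.sum_add_distrib]
    refine Finset.sum_le_sum fun i _ => ?_
    rw [← mul_add]
    exact mul_le_mul_of_nonneg_left (dist_triangle _ _ _) (hc i)
  simp only [prodPD] at h
  linarith

theorem joint_cont {H : Type*} [MetricSpace H] [CompactSpace H] {m : ℕ} (X : Fin m → Type)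
    [∀ i, MetricSpace (X i)] (e : ℕ → H) (b : ℕ) (ρ : H → ℝ) (hρ0 : ∀ h, 0 ≤ ρ h)
    (hρc : Continuous ρ) (c : H → Fin m → ℝ) (hc0 : ∀ h i, 0 ≤ c h i)
    (hcc : ∀ i, Continuous fun h => c h i) (p : ∀ i, X i)
    (hl0 : ∀ (h : H) (k : ℕ), 0 ≤ ρ h * ln e b h k)
    (hls : ∀ h : H, Summable fun k => ρ h * ln e b h k) :
    Continuous fun z : H × (Star p × Star p) =>
      (starPD p (prodPD X (c z.1) (hc0 z.1) (ρ z.1) (hρ0 z.1)) (fun k => ρ z.1 * ln e b z.1 k)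
        (hl0 z.1) (hls z.1)).D z.2.1 z.2.2 := by
  obtain ⟨R, hR⟩ : ∃ R, ∀ h, ρ h ≤ R := by
    obtain ⟨R, hR⟩ := (isCompact_range hρc).bddAbove
    exact ⟨R, fun h => hR ⟨h, rfl⟩⟩
  have hf : Continuous fun z : H × (Star p × Star p) =>
      ∑ i, c z.1 i * dist (z.2.1.1.1 i) (z.2.2.1.1 i) := by
    refine continuous_finsetSum _ fun i _ => ((hcc i).comp continuous_fst).mul ?_
    fun_prop
  refine Continuous.add ?_ ?_
  · refine hf.div (continuous_const.add ((hρc.comp continuous_fst).mul hf)) fun z => ?_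
    have h1 := hρ0 z.1
    have h2 : 0 ≤ ∑ i, c z.1 i * dist (z.2.1.1.1 i) (z.2.2.1.1 i) :=
      Finset.sum_nonneg fun i _ => mul_nonneg (hc0 _ i) dist_nonneg
    change 1 + ρ z.1 * _ ≠ 0
    positivity
  · refine continuous_tsum (u := fun k => R * ((1 / 4) ^ k * 2)) (fun k => ?_) ?_ ?_
    · refine ((hρc.comp continuous_fst).mul ((ln_cont e b k).comp continuous_fst)).mul ?_
      fun_prop
    · exact ((summable_geometric_of_lt_one (by norm_num) (by norm_num)).mul_right 2).mul_left _
    · intro k z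
      have h1 := hρ0 z.1
      have h2 := hR z.1
      have h3 := ln_pos e b z.1 k
      have h4 := ln_le e b z.1 k
      have h5 : |((z.2.1.1.2 k : unitInterval) : ℝ) - z.2.2.1.2 k| ≤ 1 := by
        rw [abs_le]
        have := (z.2.1.1.2 k).2.1
        have := (z.2.1.1.2 k).2.2
        have := (z.2.2.1.2 k).2.1
        have := (z.2.2.1.2 k).2.2
        constructor <;> linarith
      rw [Real.norm_eq_abs, abs_of_nonneg (by positivity)]
      have h6 : ρ z.1 * ln e b z.1 k ≤ R * ((1 / 4) ^ k * 2) := by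
        gcongr
        exact h1.trans h2
      calc _ ≤ ρ z.1 * ln e b z.1 k * 1 := by gcongr
        _ ≤ _ := by linarith

/-- The family of pseudometrics. -/
noncomputable def fam {H : Type*} [MetricSpace H] {m : ℕ} (X : Fin m → Type)
    [∀ i, MetricSpace (X i)] (e : ℕ → H) (b : ℕ) (ρ : H → ℝ) (hρ0 : ∀ h, 0 ≤ ρ h)
    (c : H → Fin m → ℝ) (hc0 : ∀ h i, 0 ≤ c h i) (p : ∀ i, X i) (h : H) : PD (Star p) :=
  starPD p (prodPD X (c h) (hc0 h) (ρ h) (hρ0 h)) (fun k => ρ h * ln e b h k)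
    (fun k => mul_nonneg (hρ0 h) (ln_pos e b h k).le) ((ln_summable e b h).mul_left _)

theorem fam_val {H : Type*} [MetricSpace H] {m : ℕ} (X : Fin m → Type)
    [∀ i, MetricSpace (X i)] (e : ℕ → H) (b : ℕ) (ρ : H → ℝ) (hρ0 : ∀ h, 0 ≤ ρ h)
    (c : H → Fin m → ℝ) (hc0 : ∀ h i, 0 ≤ c h i) (p : ∀ i, X i) (h : H) (i : Fin m)
    (h0 : ρ h = 0) (h1 : c h i = 1) (hz : ∀ j, j ≠ i → c h j = 0) (x y : Star p) :
    (fam X e b ρ hρ0 c hc0 p h).D x y = dist (x.1.1 i) (y.1.1 i) := by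
  change ph (ρ h) (∑ j, c h j * dist (x.1.1 j) (y.1.1 j)) + ∑' k, ρ h * ln e b h k * _ = _
  rw [h0, Finset.sum_eq_single i]
  · simp [h1, ph]
  · intro j _ hj
    rw [hz j hj, zero_mul]
  · simp

theorem fam_len {H : Type*} [MetricSpace H] {m : ℕ} (X : Fin m → Type)
    [∀ i, MetricSpace (X i)] (e : ℕ → H) (b : ℕ) (ρ : H → ℝ) (hρ0 : ∀ h, 0 ≤ ρ h)
    (c : H → Fin m → ℝ) (hc0 : ∀ h i, 0 ≤ c h i) (p : ∀ i, X i) (h : H) (hh : 0 < ρ h) :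
    ArmLen (Quo (fam X e b ρ hρ0 c hc0 p h)) = Set.range fun k => ρ h * ln e b h k := by
  rw [inv_quo]
  exact inv_star p _ _ _ _ (fun k => mul_pos hh (ln_pos e b h k))
    (fun x y z => prodPD_strict X (c h) (hc0 h) (ρ h) hh x y z)

theorem fam_cont {H : Type*} [MetricSpace H] [CompactSpace H] {m : ℕ} (X : Fin m → Type)
    [∀ i, MetricSpace (X i)] (e : ℕ → H) (b : ℕ) (ρ : H → ℝ) (hρ0 : ∀ h, 0 ≤ ρ h)
    (hρc : Continuous ρ) (c : H → Fin m → ℝ) (hc0 : ∀ h i, 0 ≤ c h i)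
    (hcc : ∀ i, Continuous fun h => c h i) (p : ∀ i, X i) :
    Continuous fun z : H × (Star p × Star p) => (fam X e b ρ hρ0 c hc0 p z.1).D z.2.1 z.2.2 :=
  joint_cont X e b ρ hρ0 hρc c hc0 hcc p _ _

theorem core {H : Type*} [MetricSpace H] [CompactSpace H] {m : ℕ} (X : Fin m → Type)
    [∀ i, MetricSpace (X i)] [∀ i, CompactSpace (X i)] [∀ i, Nonempty (X i)]
    [hpconn : ∀ i, PathConnectedSpace (X i)] (v : Fin m → H)
    (hdist : ∀ i j, i ≠ j → 0 < ghDist (X i) (X j))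
    (e : ℕ → H) (he : DenseRange e) (ρ : H → ℝ) (hρ0 : ∀ h, 0 ≤ ρ h)
    (hρc : Continuous ρ) (hρz : ∀ h, ρ h = 0 → ∃ i, h = v i) (hρv : ∀ i, ρ (v i) = 0)
    (c : H → Fin m → ℝ) (hc0 : ∀ h i, 0 ≤ c h i)
    (hcc : ∀ i, Continuous fun h => c h i) (hc1 : ∀ i, c (v i) i = 1)
    (hcz : ∀ i j, j ≠ i → c (v i) j = 0) (p : ∀ i, X i) :
    ∃ Φ : H → GHSpace,
      Topology.IsEmbedding Φ ∧
      (∀ h : H, PathConnectedSpace (Φ h).Rep) ∧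
      ∀ i, Φ (v i) = toGHSpace (X i) := by
  have : CompactSpace (Star p) := star_compact p
  have : PathConnectedSpace (Star p) := star_pathConn p
  have : Nonempty (Star p) := ⟨bp p⟩
  -- choose the extra parameter
  have hbad : (⋃ i, {b : ℕ | ∃ h, 0 < ρ h ∧
      ArmLen (X i) = Set.range fun k => ρ h * ln e b h k}).Finite := by
    refine Set.finite_iUnion fun i => Set.Subsingleton.finite ?_
    rintro b ⟨h, hh, hb⟩ b' ⟨h', hh', hb'⟩
    exact (ln_decode e he hh hh' (hb.symm.trans hb')).1
  obtain ⟨b, hb⟩ := hbad.exists_notMem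
  have hbX : ∀ i h, 0 < ρ h → ArmLen (X i) ≠ Set.range fun k => ρ h * ln e b h k := by
    intro i h hh heq
    exact hb (Set.mem_iUnion.2 ⟨i, h, hh, heq⟩)
  obtain ⟨P, hP⟩ : ∃ P, P = fam X e b ρ hρ0 c hc0 p := ⟨_, rfl⟩
  have hjoint : Continuous fun z : H × (Star p × Star p) => (P z.1).D z.2.1 z.2.2 := by
    rw [hP]
    exact fam_cont X e b ρ hρ0 hρc c hc0 hcc p
  have hcont : ∀ h, Continuous fun z : Star p × Star p => (P h).D z.1 z.2 := fun h =>
    hjoint.comp (continuous_const.prodMk continuous_id)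
  have : ∀ h, CompactSpace (Quo (P h)) := fun h => compact_quo _ (hcont h)
  have hval : ∀ i, toGHSpace (Quo (P (v i))) = toGHSpace (X i) := by
    intro i
    refine toGH_eq_of_isometry (P (v i)) (fun s => s.1.1 i) (fun x y => ?_) (fun a => ?_)
    · rw [hP]
      exact fam_val X e b ρ hρ0 c hc0 p (v i) i (hρv i) (hc1 i) (hcz i) x y
    · exact ⟨⟨(Function.update p i a, 0), star_base _ _⟩, by simp⟩
  have hinv : ∀ h, 0 < ρ h → ArmLen (Quo (P h)) = Set.range fun k => ρ h * ln e b h k := by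
    intro h hh
    rw [hP]
    exact fam_len X e b ρ hρ0 c hc0 p h hh
  refine ⟨fun h => toGHSpace (Quo (P h)), ?_, fun h => pathConn_rep (pathConn_quo _ (hcont h)),
    hval⟩
  have hΦc : Continuous fun h => toGHSpace (Quo (P h)) := continuous_family P hjoint
  refine (hΦc.isClosedEmbedding ?_).isEmbedding
  intro h h' heq
  simp only at heq
  rcases (hρ0 h).eq_or_lt with h0 | h0 <;> rcases (hρ0 h').eq_or_lt with h0' | h0'
  · obtain ⟨i, rfl⟩ := hρz h h0.symm
    obtain ⟨j, rfl⟩ := hρz h' h0'.symm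
    rw [hval, hval] at heq
    by_contra hne
    have hij : i ≠ j := fun h => hne (by rw [h])
    have := hdist i j hij
    rw [ghDist, heq, dist_self] at this
    exact this.false
  · obtain ⟨i, rfl⟩ := hρz h h0.symm
    rw [hval] at heq
    exact absurd ((inv_eq_of_toGH heq).trans (hinv h' h0')) (hbX i h' h0')
  · obtain ⟨i, rfl⟩ := hρz h' h0'.symm
    rw [hval] at heq
    exact absurd ((inv_eq_of_toGH heq.symm).trans (hinv h h0)) (hbX i h h0)
  · have := inv_eq_of_toGH heq
    rw [hinv h h0, hinv h' h0'] at this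
    exact (ln_decode e he h0 h0' this).2

theorem main {H : Type*} [MetricSpace H] [CompactSpace H]
    (n : ℕ) (v : Fin (n + 1) → H) (hv : Function.Injective v)
    (X : Fin (n + 1) → Type) [∀ i, MetricSpace (X i)] [∀ i, CompactSpace (X i)]
    [∀ i, Nonempty (X i)]
    (hpconn : ∀ i, PathConnectedSpace (X i))
    (hdist : ∀ i j, i ≠ j → 0 < ghDist (X i) (X j)) :
    ∃ Φ : H → GHSpace,
      Topology.IsEmbedding Φ ∧
      (∀ h : H, PathConnectedSpace (Φ h).Rep) ∧
      ∀ i, Φ (v i) = toGHSpace (X i) := by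
  have : Nonempty H := ⟨v 0⟩
  let e : ℕ → H := TopologicalSpace.denseSeq H
  have he : DenseRange e := TopologicalSpace.denseRange_denseSeq H
  let p : ∀ i, X i := fun i => Classical.arbitrary (X i)
  let ρ : H → ℝ := fun h => ∏ i, dist h (v i)
  have hρ0 : ∀ h, 0 ≤ ρ h := fun h => Finset.prod_nonneg fun i _ => dist_nonneg
  have hρc : Continuous ρ := continuous_finsetProd _ fun i _ => continuous_id.dist continuous_const
  have hρz : ∀ h, ρ h = 0 → ∃ i, h = v i := by
    intro h h0
    obtain ⟨i, -, hi⟩ := Finset.prod_eq_zero_iff.1 h0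
    exact ⟨i, dist_eq_zero.1 hi⟩
  have hρv : ∀ i, ρ (v i) = 0 := fun i =>
    Finset.prod_eq_zero (Finset.mem_univ i) (dist_self _)
  let c : H → Fin (n + 1) → ℝ := fun h i =>
    ∏ j ∈ Finset.univ.erase i, dist h (v j) / dist (v i) (v j)
  have hc0 : ∀ h i, 0 ≤ c h i := fun h i => Finset.prod_nonneg fun j _ => by positivity
  have hcc : ∀ i, Continuous fun h => c h i := fun i =>
    continuous_finsetProd _ fun j _ => (continuous_id.dist continuous_const).div_const _
  have hc1 : ∀ i, c (v i) i = 1 := by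
    intro i
    refine Finset.prod_eq_one fun j hj => div_self ?_
    rw [dist_ne_zero]
    exact fun h => (Finset.ne_of_mem_erase hj) (hv h).symm
  have hcz : ∀ i j, j ≠ i → c (v i) j = 0 := by
    intro i j hij
    refine Finset.prod_eq_zero (i := i) (Finset.mem_erase.2 ⟨hij.symm, Finset.mem_univ _⟩) ?_
    simp
  have : ∀ i, PathConnectedSpace (X i) := hpconn
  exact core X v hdist e he ρ hρ0 hρc hρz hρv c hc0 hcc hc1 hcz p

end GHEmb

/-- Let `H` be a compact metrizable space, `n ≥ 1`, and
`v 0, …, v n` be `n+1` distinct points of `H`.  Let `X 0, …, X n` be compact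
path-connected (nonempty) metric spaces with positive pairwise Gromov–Hausdorff
distances.  Then there is a topological embedding `Φ` of `H` into the subset
`𝒞` of the Gromov–Hausdorff space consisting of path-connected compact metric
spaces (i.e. an embedding into the Gromov–Hausdorff space whose range consists
of connected spaces) such that `Φ (v i)` is the isometry class of `X i`. -/
theorem statement1 {H : Type*} [TopologicalSpace H] [CompactSpace H]
    [TopologicalSpace.MetrizableSpace H]
    (n : ℕ) (hn : 1 ≤ n) (v : Fin (n + 1) → H) (hv : Function.Injective v)
    (X : Fin (n + 1) → Type) [∀ i, MetricSpace (X i)] [∀ i, CompactSpace (X i)]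
    [∀ i, Nonempty (X i)]
    (hpconn : ∀ i, PathConnectedSpace (X i))
    (hdist : ∀ i j, i ≠ j → 0 < ghDist (X i) (X j)) :
    ∃ Φ : H → GHSpace,
      Topology.IsEmbedding Φ ∧
      (∀ h : H, PathConnectedSpace (Φ h).Rep) ∧
      ∀ i, Φ (v i) = toGHSpace (X i) := by
  let _ : MetricSpace H := TopologicalSpace.metrizableSpaceMetric H
  exact GHEmb.main n v hv X hpconn hdist
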